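/- In every non-idempotent Kleene algebra, the sliding identity holds: for all elements p, q, (p·q)*·p = p·(q·p)*. -/

import Mathlib

/-!
For `≤`, left induction reduces the claim to `p + p q p (q p)⋆ = p (1 + q p (q p)⋆) ≤ p (q p)⋆`,
which is the left unfolding law. For `≥`, right induction reduces it in the same way to the right
unfolding law `1 + x⋆ x ≤ x⋆` with `x = p q`. That law is not an axiom; it follows from the left
one because `x⋆ x ≤ x x⋆` (`NKA.one_add_star_mul_le`).
-/

/-- A non-idempotent Kleene algebra (NKA): a (not necessarily additively
idempotent) semiring equipped with a partial order preserved by `+` and `*`,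
and a star operation satisfying `1 + p * p⋆ ≤ p⋆` and the two induction laws. -/
class NKA (K : Type*) extends Semiring K, PartialOrder K where
  star : K → K
  add_le_add' : ∀ {p q r s : K}, p ≤ q → r ≤ s → p + r ≤ q + s
  mul_le_mul' : ∀ {p q r s : K}, p ≤ q → r ≤ s → p * r ≤ q * s
  one_add_mul_star_le : ∀ p : K, 1 + p * star p ≤ star p
  star_ind_left : ∀ {p q r : K}, q + p * r ≤ r → star p * q ≤ r
  star_ind_right : ∀ {p q r : K}, q + r * p ≤ r → q * star p ≤ r

postfix:max "⋆" => NKA.star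

/-- The right unfolding law, derived from the left one and left induction. -/
theorem NKA.one_add_star_mul_le {K : Type*} [NKA K] (x : K) : 1 + x⋆ * x ≤ x⋆ := by
  have h : x⋆ * x ≤ x * x⋆ := by
    apply NKA.star_ind_left
    calc x + x * (x * x⋆) = x * (1 + x * x⋆) := by rw [mul_add, mul_one]
      _ ≤ x * x⋆ := NKA.mul_le_mul' le_rfl (NKA.one_add_mul_star_le x)
  exact (NKA.add_le_add' le_rfl h).trans (NKA.one_add_mul_star_le x)

/-- Sliding identity in any non-idempotent Kleene algebra. -/
theorem nka_sliding {K : Type*} [NKA K] (p q : K) :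
    (p * q)⋆ * p = p * (q * p)⋆ := by
  apply le_antisymm
  · apply NKA.star_ind_left
    calc p + p * q * (p * (q * p)⋆) = p * (1 + q * p * (q * p)⋆) := by
          simp only [mul_add, mul_one, mul_assoc]
      _ ≤ p * (q * p)⋆ := NKA.mul_le_mul' le_rfl (NKA.one_add_mul_star_le _)
  · apply NKA.star_ind_right
    calc p + (p * q)⋆ * p * (q * p) = (1 + (p * q)⋆ * (p * q)) * p := by
          simp only [add_mul, one_mul, mul_assoc]
      _ ≤ (p * q)⋆ * p := NKA.mul_le_mul' (NKA.one_add_star_mul_le _) le_rfl
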